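/- arXiv:2405.05717 — 2 statements merged into one kernel-verified Lean document; each statement's English description precedes it below -/
import Mathlib

section
/- Assume ζ₀ := ū^{in}/u_s > 1, let (u₀, E₀) ∈ T_acc with 0 < u₀ < u_s, and let (ū₁, Ē) : [0, l_max] → ℝ² be the unique smooth accelerating solution of the one-dimensional Euler–Poisson ODE system with these initial data (ū₁ > 0, ū₁' > 0 on [0, l_max), ū₁'(x₁) → 0 as x₁ → l_max⁻). Then: (iii) the image {(ū₁(x₁), Ē(x₁)) : 0 ≤ x₁ ≤ l_max} equals T_acc ∩ {(u,E) : u ≥ u₀}; and (iv) there exists a unique constant l_s ∈ (0, l_max) such that ū₁(x₁) < u_s for x₁ < l_s, ū₁(l_s) = u_s, and ū₁(x₁) > u_s for x₁ > l_s. -/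
open Set Filter intervalIntegral

/-- The sonic speed `u_s = (γ S₀ J^{γ−1})^{1/(γ+1)}`. -/
noncomputable def usonic (γ S₀ J : ℝ) : ℝ :=
  (γ * S₀ * J ^ (γ - 1)) ^ (1 / (γ + 1))

/-- `ū^{in} = J / ρ̄^{in}`. -/
noncomputable def uIn (ρin J : ℝ) : ℝ := J / ρin

/-- `H(u) = (J/ū^{in}) ∫_{u_s}^{u} t^{−(γ+1)} (t^{γ+1} − u_s^{γ+1})(ū^{in} − t) dt`. -/
noncomputable def Hfun (γ ρin S₀ J : ℝ) (u : ℝ) : ℝ :=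
  (J / uIn ρin J) *
    ∫ t in usonic γ S₀ J..u,
      t ^ (-(γ + 1)) * ((t ^ (γ + 1) - usonic γ S₀ J ^ (γ + 1)) * (uIn ρin J - t))

/-- The critical trajectory `T = {(u,E) ∈ (0,∞) × ℝ : ½E² − H(u) = 0}`. -/
def critTraj (γ ρin S₀ J : ℝ) : Set (ℝ × ℝ) :=
  {p | 0 < p.1 ∧ p.2 ^ 2 / 2 - Hfun γ ρin S₀ J p.1 = 0}

/-- The critical trajectory with acceleration. -/
def critTrajAcc (γ ρin S₀ J : ℝ) : Set (ℝ × ℝ) :=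
  {p ∈ critTraj γ ρin S₀ J | 0 ≤ (p.1 - usonic γ S₀ J) * p.2}

/-- The critical trajectory with deceleration. -/
def critTrajDec (γ ρin S₀ J : ℝ) : Set (ℝ × ℝ) :=
  {p ∈ critTraj γ ρin S₀ J | (p.1 - usonic γ S₀ J) * p.2 ≤ 0}

/-!
The quantity `½ E² - H(u)` is conserved, also across the sonic speed, so a solution that starts on
the critical trajectory stays on it. Since `H` vanishes at `u_s`, decreases on `(0, u_s]`, increases
on `[u_s, ū^{in}]` and decreases again beyond `ū^{in}`, it has at most one zero besides `u_s`; that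
zero exceeds `ū^{in}`, and `H` is negative beyond it.

At the right end `b` the velocity is stationary, so the momentum equation gives `E(b) = 0` and hence
`H(u(b)) = 0`. The end cannot be sonic: there both factors of `(u^{γ+1} - u_s^{γ+1}) u'` vanish, the
first one differentiably, so the derivative of `E u^γ` would be zero, whereas it is
`(J / u_s - ρ^{in}) u_s^γ > 0`. Thus `u(b)` is the second zero of `H`. So the increasing function
`u` crosses `u_s` once and attains every velocity `≥ u(a)` of the trajectory; on its accelerating
part the velocity determines `E`.
-/

section Calculus

open Topology

theorem existsUnique_crossing_of_strictMonoOn {α δ : Type*} [ConditionallyCompleteLinearOrder α]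
    [TopologicalSpace α] [OrderTopology α] [DenselyOrdered α] [LinearOrder δ] [TopologicalSpace δ]
    [OrderClosedTopology δ] {f : α → δ} {a b : α} {c : δ} (hab : a ≤ b)
    (hf : StrictMonoOn f (Icc a b)) (hcont : ContinuousOn f (Icc a b))
    (hc : c ∈ Ioo (f a) (f b)) :
    ∃! t, t ∈ Ioo a b ∧
      ∀ x ∈ Icc a b, (x < t → f x < c) ∧ (x = t → f x = c) ∧ (t < x → c < f x) := by
  obtain ⟨t, ht, rfl⟩ := intermediate_value_Ioo hab hcont hc
  have ht' : t ∈ Icc a b := Ioo_subset_Icc_self ht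
  refine ⟨t, ⟨ht, fun x hx => ⟨hf hx ht', fun h => h ▸ rfl, hf ht' hx⟩⟩, ?_⟩
  rintro y ⟨hy, hcross⟩
  have hy' : y ∈ Icc a b := Ioo_subset_Icc_self hy
  exact hf.injOn hy' ht' ((hcross y hy').2.1 rfl)

theorem hasDerivWithinAt_mul_of_left_eq_zero {𝕜 : Type*} [NontriviallyNormedField 𝕜]
    {f g : 𝕜 → 𝕜} {f' x : 𝕜} {s : Set 𝕜} (hf : HasDerivWithinAt f f' s x) (hfx : f x = 0)
    (hg : ContinuousWithinAt g s x) :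
    HasDerivWithinAt (fun y => f y * g y) (f' * g x) s x := by
  rw [hasDerivWithinAt_iff_tendsto_slope] at hf ⊢
  refine (hf.mul (hg.mono sdiff_subset)).congr fun y => ?_
  simp only [slope_def_field, hfx, zero_mul, sub_zero]
  ring

theorem derivWithin_Icc_right_eq_of_tendsto {F : Type*} [NormedAddCommGroup F] [NormedSpace ℝ F]
    {f : ℝ → F} {a b : ℝ} {c : F} (hab : a < b) (hf : DifferentiableOn ℝ f (Icc a b))
    (hlim : Tendsto (derivWithin f (Icc a b)) (𝓝[<] b) (𝓝 c)) :
    derivWithin f (Icc a b) b = c := by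
  have hb : b ∈ Icc a b := right_mem_Icc.2 hab.le
  have hderiv : derivWithin f (Icc a b) =ᶠ[𝓝[<] b] deriv f := by
    filter_upwards [Ioo_mem_nhdsLT hab] with x hx
    exact derivWithin_of_mem_nhds (Icc_mem_nhds hx.1 hx.2)
  have hleft : HasDerivWithinAt f c (Iic b) b :=
    hasDerivWithinAt_Iic_of_tendsto_deriv (hf.mono Ioo_subset_Icc_self)
      ((hf b hb).continuousWithinAt.mono Ioo_subset_Icc_self) (Ioo_mem_nhdsLT hab)
      (hlim.congr' hderiv)
  exact (hleft.mono Icc_subset_Iic_self).derivWithin (uniqueDiffOn_Icc hab b hb)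

end Calculus

section EulerPoisson

open Topology

variable {γ ρin S₀ J : ℝ}

theorem usonic_pos (hγ : 0 < γ) (hS₀ : 0 < S₀) (hJ : 0 < J) : 0 < usonic γ S₀ J := by
  unfold usonic
  positivity

theorem Hfun_usonic : Hfun γ ρin S₀ J (usonic γ S₀ J) = 0 := by
  simp [Hfun]

-- The integrand defining `H` simplifies because `J / ū^{in} = ρ^{in}`; in this form `H'(u) u'`
-- is `E E'` along the flow.
theorem hasDerivAt_Hfun (hρin : ρin ≠ 0) (hJ : J ≠ 0) (hus : 0 < usonic γ S₀ J) {v : ℝ}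
    (hv : 0 < v) :
    HasDerivAt (Hfun γ ρin S₀ J)
      ((v ^ (γ + 1) - usonic γ S₀ J ^ (γ + 1)) / v ^ γ * (J / v - ρin)) v := by
  have hpow (p : ℝ) : ContinuousOn (fun t : ℝ => t ^ p) (Ioi 0) :=
    continuousOn_id.rpow_const fun t ht => Or.inl (ne_of_gt ht)
  have hcont : ContinuousOn (fun t : ℝ => t ^ (-(γ + 1)) *
      ((t ^ (γ + 1) - usonic γ S₀ J ^ (γ + 1)) * (uIn ρin J - t))) (Ioi 0) :=
    (hpow _).mul (((hpow _).sub continuousOn_const).mul (continuousOn_const.sub continuousOn_id))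
  have hsub : uIcc (usonic γ S₀ J) v ⊆ Ioi 0 := fun t ht => (lt_min hus hv).trans_le ht.1
  refine ((integral_hasDerivAt_right (hcont.mono hsub).intervalIntegrable
    (hcont.stronglyMeasurableAtFilter isOpen_Ioi v hv)
    (hcont.continuousAt (Ioi_mem_nhds hv))).const_mul (J / uIn ρin J)).congr_deriv ?_
  have hvγ : v ^ γ ≠ 0 := (Real.rpow_pos_of_pos hv γ).ne'
  rw [Real.rpow_neg hv.le, Real.rpow_add_one hv.ne' γ, uIn]
  field_simp

theorem strictAntiOn_Hfun_Ioc (hγ : 0 < γ + 1) (hρin : 0 < ρin) (hJ : 0 < J)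
    (hlt : usonic γ S₀ J ≤ uIn ρin J) :
    StrictAntiOn (Hfun γ ρin S₀ J) (Ioc 0 (usonic γ S₀ J)) := by
  intro w hw
  have hus : 0 < usonic γ S₀ J := hw.1.trans_le hw.2
  refine strictAntiOn_of_deriv_neg (convex_Ioc _ _) (fun v hv =>
    (hasDerivAt_Hfun hρin.ne' hJ.ne' hus hv.1).continuousAt.continuousWithinAt) ?_ hw
  rw [interior_Ioc]
  rintro v ⟨hv, hvs⟩
  rw [(hasDerivAt_Hfun hρin.ne' hJ.ne' hus hv).deriv]
  have hpow : v ^ (γ + 1) < usonic γ S₀ J ^ (γ + 1) := Real.rpow_lt_rpow hv.le hvs hγ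
  have hfield : ρin < J / v := (lt_div_comm₀ hv hρin).1 (hvs.trans_le hlt)
  exact mul_neg_of_neg_of_pos
    (div_neg_of_neg_of_pos (sub_neg.2 hpow) (Real.rpow_pos_of_pos hv γ)) (sub_pos.2 hfield)

theorem strictMonoOn_Hfun_Icc (hγ : 0 < γ + 1) (hρin : 0 < ρin) (hJ : 0 < J)
    (hus : 0 < usonic γ S₀ J) :
    StrictMonoOn (Hfun γ ρin S₀ J) (Icc (usonic γ S₀ J) (uIn ρin J)) := by
  refine strictMonoOn_of_deriv_pos (convex_Icc _ _) (fun v hv =>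
    (hasDerivAt_Hfun hρin.ne' hJ.ne' hus (hus.trans_le hv.1)).continuousAt.continuousWithinAt) ?_
  rw [interior_Icc]
  rintro v ⟨hvs, hvi⟩
  have hv : 0 < v := hus.trans hvs
  rw [(hasDerivAt_Hfun hρin.ne' hJ.ne' hus hv).deriv]
  have hpow : usonic γ S₀ J ^ (γ + 1) < v ^ (γ + 1) := Real.rpow_lt_rpow hus.le hvs hγ
  have hfield : ρin < J / v := (lt_div_comm₀ hv hρin).1 hvi
  exact mul_pos (div_pos (sub_pos.2 hpow) (Real.rpow_pos_of_pos hv γ)) (sub_pos.2 hfield)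

theorem strictAntiOn_Hfun_Ici (hγ : 0 < γ + 1) (hρin : 0 < ρin) (hJ : 0 < J)
    (hus : 0 < usonic γ S₀ J) (hlt : usonic γ S₀ J ≤ uIn ρin J) :
    StrictAntiOn (Hfun γ ρin S₀ J) (Ici (uIn ρin J)) := by
  refine strictAntiOn_of_deriv_neg (convex_Ici _) (fun v hv =>
    (hasDerivAt_Hfun hρin.ne' hJ.ne' hus
      ((hus.trans_le hlt).trans_le hv)).continuousAt.continuousWithinAt) ?_
  rw [interior_Ici]
  intro v (hvi : uIn ρin J < v)
  have hv : 0 < v := hus.trans (hlt.trans_lt hvi)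
  rw [(hasDerivAt_Hfun hρin.ne' hJ.ne' hus hv).deriv]
  have hpow : usonic γ S₀ J ^ (γ + 1) < v ^ (γ + 1) :=
    Real.rpow_lt_rpow hus.le (hlt.trans_lt hvi) hγ
  have hfield : J / v < ρin := (div_lt_comm₀ hρin hv).1 hvi
  exact mul_neg_of_pos_of_neg
    (div_pos (sub_pos.2 hpow) (Real.rpow_pos_of_pos hv γ)) (sub_neg.2 hfield)

theorem uIn_lt_of_Hfun_eq_zero (hγ : 0 < γ + 1) (hρin : 0 < ρin) (hJ : 0 < J)
    (hus : 0 < usonic γ S₀ J) (hlt : usonic γ S₀ J ≤ uIn ρin J) {v : ℝ} (hv : 0 < v)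
    (hne : v ≠ usonic γ S₀ J) (hzero : Hfun γ ρin S₀ J v = 0) : uIn ρin J < v := by
  by_contra! hvi
  refine hne ?_
  have heq : Hfun γ ρin S₀ J v = Hfun γ ρin S₀ J (usonic γ S₀ J) := hzero.trans Hfun_usonic.symm
  rcases le_total v (usonic γ S₀ J) with hvs | hvs
  · exact (strictAntiOn_Hfun_Ioc hγ hρin hJ hlt).injOn ⟨hv, hvs⟩ ⟨hus, le_rfl⟩ heq
  · exact (strictMonoOn_Hfun_Icc hγ hρin hJ hus).injOn ⟨hvs, hvi⟩ ⟨le_rfl, hlt⟩ heq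

theorem Hfun_nonneg_of_mem_critTraj {p : ℝ × ℝ} (hp : p ∈ critTraj γ ρin S₀ J) :
    0 ≤ Hfun γ ρin S₀ J p.1 := by
  rw [← sub_eq_zero.1 hp.2]
  positivity

theorem injOn_fst_critTrajAcc : InjOn Prod.fst (critTrajAcc γ ρin S₀ J) := by
  rintro ⟨v, F⟩ ⟨⟨-, hF⟩, hFs⟩ ⟨w, G⟩ ⟨⟨-, hG⟩, hGs⟩ (rfl : v = w)
  dsimp only at hF hFs hG hGs
  rw [Prod.mk.injEq]
  refine ⟨rfl, ?_⟩
  have hsq : F ^ 2 = G ^ 2 := by linarith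
  rcases lt_trichotomy v (usonic γ S₀ J) with hv | rfl | hv
  · have hF0 : F ≤ 0 := nonpos_of_mul_nonneg_right hFs (sub_neg.2 hv)
    have hG0 : G ≤ 0 := nonpos_of_mul_nonneg_right hGs (sub_neg.2 hv)
    exact neg_injective ((sq_eq_sq₀ (neg_nonneg.2 hF0) (neg_nonneg.2 hG0)).1
      (by rw [neg_sq, neg_sq, hsq]))
  · rw [Hfun_usonic] at hF hG
    have hF0 : F = 0 := pow_eq_zero_iff two_ne_zero |>.1 (by linarith)
    have hG0 : G = 0 := pow_eq_zero_iff two_ne_zero |>.1 (by linarith)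
    rw [hF0, hG0]
  · have hF0 : 0 ≤ F := nonneg_of_mul_nonneg_right hFs (sub_pos.2 hv)
    have hG0 : 0 ≤ G := nonneg_of_mul_nonneg_right hGs (sub_pos.2 hv)
    exact (sq_eq_sq₀ hF0 hG0).1 hsq

/-- Differentiable solutions `(u, E)` with positive velocity of the one-dimensional Euler–Poisson
system on `s`, the setting for energy conservation. The momentum equation is kept in the multiplied
form, which makes sense across the sonic speed; derivatives at endpoints are one-sided. -/
structure IsEulerPoissonSolutionOn (γ ρin S₀ J : ℝ) (s : Set ℝ) (u E : ℝ → ℝ) : Prop where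
  differentiableOn_velocity : DifferentiableOn ℝ u s
  differentiableOn_field : DifferentiableOn ℝ E s
  velocity_pos : ∀ x ∈ s, 0 < u x
  momentum : ∀ x ∈ s,
    (u x ^ (γ + 1) - usonic γ S₀ J ^ (γ + 1)) * derivWithin u s x = E x * u x ^ γ
  poisson : ∀ x ∈ s, derivWithin E s x = J / u x - ρin

/-- Accelerating solutions on `[a, b]`, the objects whose trajectories are described below; `b` (the
paper's `l_max`) is the place at which the acceleration ceases. -/
structure IsAcceleratingSolution (γ ρin S₀ J a b : ℝ) (u E : ℝ → ℝ) : Prop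
    extends IsEulerPoissonSolutionOn γ ρin S₀ J (Icc a b) u E where
  derivWithin_pos : ∀ x ∈ Ico a b, 0 < derivWithin u (Icc a b) x
  tendsto_derivWithin : Tendsto (derivWithin u (Icc a b)) (𝓝[<] b) (𝓝 0)

namespace IsEulerPoissonSolutionOn

variable {s : Set ℝ} {u E : ℝ → ℝ} {x y : ℝ}

theorem hasDerivWithinAt_velocity (h : IsEulerPoissonSolutionOn γ ρin S₀ J s u E) (hx : x ∈ s) :
    HasDerivWithinAt u (derivWithin u s x) s x :=
  (h.differentiableOn_velocity x hx).hasDerivWithinAt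

theorem hasDerivWithinAt_field (h : IsEulerPoissonSolutionOn γ ρin S₀ J s u E) (hx : x ∈ s) :
    HasDerivWithinAt E (J / u x - ρin) s x :=
  h.poisson x hx ▸ (h.differentiableOn_field x hx).hasDerivWithinAt

theorem hasDerivWithinAt_energy (h : IsEulerPoissonSolutionOn γ ρin S₀ J s u E)
    (hρin : ρin ≠ 0) (hJ : J ≠ 0) (hus : 0 < usonic γ S₀ J) (hx : x ∈ s) :
    HasDerivWithinAt (fun z => E z ^ 2 / 2 - Hfun γ ρin S₀ J (u z)) 0 s x := by
  have hu : 0 < u x := h.velocity_pos x hx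
  refine ((((h.hasDerivWithinAt_field hx).pow 2).div_const 2).sub
    ((hasDerivAt_Hfun hρin hJ hus hu).comp_hasDerivWithinAt x
      (h.hasDerivWithinAt_velocity hx))).congr_deriv ?_
  have hforce : (u x ^ (γ + 1) - usonic γ S₀ J ^ (γ + 1)) / u x ^ γ * derivWithin u s x = E x := by
    rw [div_mul_eq_mul_div, h.momentum x hx,
      mul_div_cancel_right₀ _ (Real.rpow_pos_of_pos hu γ).ne']
  rw [mul_right_comm _ (J / u x - ρin), hforce]
  push_cast
  ring

theorem energy_eq (h : IsEulerPoissonSolutionOn γ ρin S₀ J s u E) (hs : Convex ℝ s)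
    (hρin : ρin ≠ 0) (hJ : J ≠ 0) (hus : 0 < usonic γ S₀ J) (hx : x ∈ s) (hy : y ∈ s) :
    E y ^ 2 / 2 - Hfun γ ρin S₀ J (u y) = E x ^ 2 / 2 - Hfun γ ρin S₀ J (u x) := by
  have hbound := hs.norm_image_sub_le_of_norm_hasDerivWithin_le
    (fun z hz => h.hasDerivWithinAt_energy hρin hJ hus hz) (fun _ _ => norm_zero.le) hx hy
  rwa [zero_mul, norm_le_zero_iff, sub_eq_zero] at hbound

theorem mem_critTraj (h : IsEulerPoissonSolutionOn γ ρin S₀ J s u E) (hs : Convex ℝ s)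
    (hρin : ρin ≠ 0) (hJ : J ≠ 0) (hus : 0 < usonic γ S₀ J) (hx : x ∈ s)
    (hinit : (u x, E x) ∈ critTraj γ ρin S₀ J) (hy : y ∈ s) :
    (u y, E y) ∈ critTraj γ ρin S₀ J :=
  ⟨h.velocity_pos y hy, (h.energy_eq hs hρin hJ hus hx hy).trans hinit.2⟩

theorem sub_usonic_mul_field_nonneg (h : IsEulerPoissonSolutionOn γ ρin S₀ J s u E)
    (hγ : 0 ≤ γ + 1) (hus : 0 ≤ usonic γ S₀ J) (hx : x ∈ s) (hacc : 0 ≤ derivWithin u s x) :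
    0 ≤ (u x - usonic γ S₀ J) * E x := by
  have hu : 0 < u x := h.velocity_pos x hx
  have hsame : 0 ≤ (u x - usonic γ S₀ J) * (u x ^ (γ + 1) - usonic γ S₀ J ^ (γ + 1)) := by
    rcases le_total (u x) (usonic γ S₀ J) with hle | hle
    · exact mul_nonneg_of_nonpos_of_nonpos (sub_nonpos.2 hle)
        (sub_nonpos.2 (Real.rpow_le_rpow hu.le hle hγ))
    · exact mul_nonneg (sub_nonneg.2 hle) (sub_nonneg.2 (Real.rpow_le_rpow hus hle hγ))
  refine nonneg_of_mul_nonneg_left ?_ (Real.rpow_pos_of_pos hu γ)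
  rw [mul_assoc, ← h.momentum x hx, ← mul_assoc]
  exact mul_nonneg hsame hacc

end IsEulerPoissonSolutionOn

namespace IsAcceleratingSolution

variable {a b : ℝ} {u E : ℝ → ℝ} {x : ℝ}

theorem strictMonoOn (h : IsAcceleratingSolution γ ρin S₀ J a b u E) :
    StrictMonoOn u (Icc a b) := by
  refine strictMonoOn_of_deriv_pos (convex_Icc _ _) h.differentiableOn_velocity.continuousOn ?_
  rw [interior_Icc]
  intro x hx
  rw [← derivWithin_of_mem_nhds (Icc_mem_nhds hx.1 hx.2)]
  exact h.derivWithin_pos x (Ioo_subset_Ico_self hx)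

theorem derivWithin_right (h : IsAcceleratingSolution γ ρin S₀ J a b u E) (hab : a < b) :
    derivWithin u (Icc a b) b = 0 :=
  derivWithin_Icc_right_eq_of_tendsto hab h.differentiableOn_velocity h.tendsto_derivWithin

theorem continuousWithinAt_derivWithin_right (h : IsAcceleratingSolution γ ρin S₀ J a b u E)
    (hab : a < b) : ContinuousWithinAt (derivWithin u (Icc a b)) (Icc a b) b := by
  rw [continuousWithinAt_Icc_iff_Iic hab, ← continuousWithinAt_Iio_iff_Iic, ContinuousWithinAt,
    h.derivWithin_right hab]
  exact h.tendsto_derivWithin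

theorem derivWithin_nonneg (h : IsAcceleratingSolution γ ρin S₀ J a b u E) (hab : a < b)
    (hx : x ∈ Icc a b) : 0 ≤ derivWithin u (Icc a b) x := by
  rcases hx.2.eq_or_lt with rfl | hxb
  · exact (h.derivWithin_right hab).ge
  · exact (h.derivWithin_pos x ⟨hx.1, hxb⟩).le

theorem field_right (h : IsAcceleratingSolution γ ρin S₀ J a b u E) (hab : a < b) : E b = 0 := by
  have hb : b ∈ Icc a b := right_mem_Icc.2 hab.le
  have hmom := h.momentum b hb
  rw [h.derivWithin_right hab, mul_zero] at hmom
  exact (mul_eq_zero.1 hmom.symm).resolve_right (Real.rpow_pos_of_pos (h.velocity_pos b hb) γ).ne'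

theorem velocity_right_ne_usonic (h : IsAcceleratingSolution γ ρin S₀ J a b u E) (hab : a < b)
    (hρin : 0 < ρin) (hlt : usonic γ S₀ J < uIn ρin J) : u b ≠ usonic γ S₀ J := by
  intro hsonic
  have hb : b ∈ Icc a b := right_mem_Icc.2 hab.le
  have hu : 0 < u b := h.velocity_pos b hb
  have hvel := h.hasDerivWithinAt_velocity hb
  have hmomentum := hasDerivWithinAt_mul_of_left_eq_zero
    ((hvel.rpow_const (p := γ + 1) (Or.inl hu.ne')).sub_const (usonic γ S₀ J ^ (γ + 1)))
    (by rw [hsonic, sub_self]) (h.continuousWithinAt_derivWithin_right hab)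
  have hforce := hasDerivWithinAt_mul_of_left_eq_zero (h.hasDerivWithinAt_field hb)
    (h.field_right hab) (hvel.continuousWithinAt.rpow_const (p := γ) (Or.inl hu.ne'))
  have heq := (uniqueDiffOn_Icc hab b hb).eq_deriv _
    (hforce.congr h.momentum (h.momentum b hb)) hmomentum
  rw [h.derivWithin_right hab, mul_zero] at heq
  have hfield : ρin < J / u b := (lt_div_comm₀ hu hρin).1 (hsonic.trans_lt hlt)
  exact (mul_pos (sub_pos.2 hfield) (Real.rpow_pos_of_pos hu γ)).ne' heq

theorem Hfun_velocity_right (h : IsAcceleratingSolution γ ρin S₀ J a b u E) (hab : a < b)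
    (htraj : (u b, E b) ∈ critTraj γ ρin S₀ J) : Hfun γ ρin S₀ J (u b) = 0 := by
  have henergy : E b ^ 2 / 2 - Hfun γ ρin S₀ J (u b) = 0 := htraj.2
  rw [h.field_right hab] at henergy
  linarith

theorem uIn_lt_velocity_right (h : IsAcceleratingSolution γ ρin S₀ J a b u E) (hab : a < b)
    (hγ : 0 < γ + 1) (hρin : 0 < ρin) (hJ : 0 < J) (hus : 0 < usonic γ S₀ J)
    (hlt : usonic γ S₀ J < uIn ρin J) (htraj : (u b, E b) ∈ critTraj γ ρin S₀ J) :
    uIn ρin J < u b :=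
  uIn_lt_of_Hfun_eq_zero hγ hρin hJ hus hlt.le htraj.1
    (h.velocity_right_ne_usonic hab hρin hlt) (h.Hfun_velocity_right hab htraj)

theorem fst_le_velocity_right (h : IsAcceleratingSolution γ ρin S₀ J a b u E) (hab : a < b)
    (hγ : 0 < γ + 1) (hρin : 0 < ρin) (hJ : 0 < J) (hus : 0 < usonic γ S₀ J)
    (hlt : usonic γ S₀ J < uIn ρin J) (htraj : (u b, E b) ∈ critTraj γ ρin S₀ J)
    {p : ℝ × ℝ} (hp : p ∈ critTraj γ ρin S₀ J) : p.1 ≤ u b := by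
  by_contra! hbp
  have hend := h.uIn_lt_velocity_right hab hγ hρin hJ hus hlt htraj
  have hneg : Hfun γ ρin S₀ J p.1 < Hfun γ ρin S₀ J (u b) :=
    strictAntiOn_Hfun_Ici hγ hρin hJ hus hlt.le hend.le (hend.trans hbp).le hbp
  rw [h.Hfun_velocity_right hab htraj] at hneg
  exact hneg.not_ge (Hfun_nonneg_of_mem_critTraj hp)

theorem image_eq_critTrajAcc (h : IsAcceleratingSolution γ ρin S₀ J a b u E) (hab : a < b)
    (hγ : 0 < γ + 1) (hρin : 0 < ρin) (hJ : 0 < J) (hus : 0 < usonic γ S₀ J)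
    (hlt : usonic γ S₀ J < uIn ρin J)
    (htraj : ∀ x ∈ Icc a b, (u x, E x) ∈ critTraj γ ρin S₀ J) :
    (fun x => (u x, E x)) '' Icc a b
      = critTrajAcc γ ρin S₀ J ∩ {p : ℝ × ℝ | u a ≤ p.1} := by
  have hmem : ∀ x ∈ Icc a b, (u x, E x) ∈ critTrajAcc γ ρin S₀ J := fun x hx =>
    ⟨htraj x hx, h.sub_usonic_mul_field_nonneg hγ.le hus.le hx (h.derivWithin_nonneg hab hx)⟩
  refine Subset.antisymm ?_ ?_
  · rintro _ ⟨x, hx, rfl⟩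
    exact ⟨hmem x hx, h.strictMonoOn.monotoneOn (left_mem_Icc.2 hab.le) hx hx.1⟩
  · rintro p ⟨hp, hap⟩
    have hpb : p.1 ≤ u b := h.fst_le_velocity_right hab hγ hρin hJ hus hlt
      (htraj b (right_mem_Icc.2 hab.le)) hp.1
    obtain ⟨x, hx, hxp⟩ := intermediate_value_Icc hab.le
      h.differentiableOn_velocity.continuousOn ⟨hap, hpb⟩
    exact ⟨x, hx, injOn_fst_critTrajAcc (hmem x hx) hp hxp⟩

end IsAcceleratingSolution

theorem stmt7_general {a b : ℝ} {u E : ℝ → ℝ} (hγ : 0 < γ) (hρin : 0 < ρin) (hS₀ : 0 < S₀)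
    (hJ : 0 < J) (hζ₀ : 1 < uIn ρin J / usonic γ S₀ J) (hab : a < b)
    (hsol : IsAcceleratingSolution γ ρin S₀ J a b u E)
    (hinit : (u a, E a) ∈ critTraj γ ρin S₀ J) (hua : u a < usonic γ S₀ J) :
    ((fun x => (u x, E x)) '' Icc a b
      = critTrajAcc γ ρin S₀ J ∩ {p : ℝ × ℝ | u a ≤ p.1}) ∧
    (∃! ls : ℝ, ls ∈ Ioo a b ∧
      ∀ x ∈ Icc a b,
        (x < ls → u x < usonic γ S₀ J) ∧
        (x = ls → u x = usonic γ S₀ J) ∧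
        (ls < x → usonic γ S₀ J < u x)) := by
  have hγ' : 0 < γ + 1 := by linarith
  have hus : 0 < usonic γ S₀ J := usonic_pos hγ hS₀ hJ
  have hlt : usonic γ S₀ J < uIn ρin J := (one_lt_div hus).1 hζ₀
  have htraj : ∀ x ∈ Icc a b, (u x, E x) ∈ critTraj γ ρin S₀ J := fun x hx =>
    hsol.mem_critTraj (convex_Icc a b) hρin.ne' hJ.ne' hus (left_mem_Icc.2 hab.le) hinit hx
  have hend : uIn ρin J < u b := hsol.uIn_lt_velocity_right hab hγ' hρin hJ hus hlt
    (htraj b (right_mem_Icc.2 hab.le))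
  exact ⟨hsol.image_eq_critTrajAcc hab hγ' hρin hJ hus hlt htraj,
    existsUnique_crossing_of_strictMonoOn hab.le hsol.strictMonoOn
      hsol.differentiableOn_velocity.continuousOn ⟨hua, hlt.trans hend⟩⟩

end EulerPoisson

/-- Lemma 1.1 (iii) and (iv): the accelerating smooth transonic solution traverses exactly
the portion `u ≥ u₀` of the accelerating critical trajectory, and passes through the sonic
speed at a unique location `l_s ∈ (0, l_max)`. -/
theorem stmt7
    (γ ρin S₀ J u₀ E₀ lmax : ℝ)
    (hγ : 1 < γ) (hρin : 0 < ρin) (hS₀ : 0 < S₀) (hJ : 0 < J)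
    (hζ₀ : 1 < uIn ρin J / usonic γ S₀ J)
    (hinit : (u₀, E₀) ∈ critTrajAcc γ ρin S₀ J)
    (hu₀ : 0 < u₀) (hu₀s : u₀ < usonic γ S₀ J)
    (hlmax : 0 < lmax)
    (u E : ℝ → ℝ)
    (husm : ContDiffOn ℝ (⊤ : ℕ∞) u (Icc 0 lmax)) (hEsm : ContDiffOn ℝ (⊤ : ℕ∞) E (Icc 0 lmax))
    (hupos : ∀ x ∈ Icc (0:ℝ) lmax, 0 < u x)
    (hu0 : u 0 = u₀) (hE0 : E 0 = E₀)
    (hODE : ∀ x ∈ Icc (0:ℝ) lmax,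
      (u x ^ (γ + 1) - usonic γ S₀ J ^ (γ + 1)) * derivWithin u (Icc 0 lmax) x
        = E x * u x ^ γ ∧
      derivWithin E (Icc 0 lmax) x = J / u x - ρin)
    (hacc : ∀ x ∈ Ico (0:ℝ) lmax, 0 < derivWithin u (Icc 0 lmax) x)
    (hacc0 : Tendsto (derivWithin u (Icc 0 lmax)) (nhdsWithin lmax (Iio lmax)) (nhds 0)) :
    -- (iii) the image of the solution is T_acc ∩ {u ≥ u₀}
    ((fun x => (u x, E x)) '' Icc 0 lmax
      = critTrajAcc γ ρin S₀ J ∩ {p : ℝ × ℝ | u₀ ≤ p.1}) ∧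
    -- (iv) a unique sonic location l_s ∈ (0, l_max)
    (∃! ls : ℝ, ls ∈ Ioo 0 lmax ∧
      ∀ x ∈ Icc (0:ℝ) lmax,
        (x < ls → u x < usonic γ S₀ J) ∧
        (x = ls → u x = usonic γ S₀ J) ∧
        (ls < x → usonic γ S₀ J < u x)) := by
  subst hu0 hE0
  exact stmt7_general (by linarith) hρin hS₀ hJ hζ₀ hlmax
    ⟨⟨husm.differentiableOn (by simp), hEsm.differentiableOn (by simp), hupos,
      fun x hx => (hODE x hx).1, fun x hx => (hODE x hx).2⟩, hacc, hacc0⟩ hinit.1 hu₀s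
end

section
/- Assume ζ₀ := ū^{in}/u_s > 1, let (u₀, E₀) ∈ T_acc with 0 < u₀ < u_s, and let (ū₁, Ē) : [0, l_max] → ℝ² be a smooth solution of the system (ū₁^{γ+1} − u_s^{γ+1})·ū₁' = Ē·ū₁^γ, Ē' = J/ū₁ − ρ̄^{in} with (ū₁, Ē)(0) = (u₀, E₀), ū₁ > 0, and ū₁' > 0 on [0, l_max). Define α₁₁ := 1 − (ū₁/u_s)^{γ+1} and β₁ := (Ē − (γ+1)ū₁'ū₁)·ū₁^{γ−1}/u_s^{γ+1}. Then for every L ∈ (0, l_max) there exists a constant λ_L > 0 such that for every m ∈ {0,1,2,3} and every x₁ ∈ [0, L]: −2β₁(x₁) − (2m−1)·α₁₁'(x₁) ≥ λ_L. -/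
open Set Filter intervalIntegral

/-! The first equation of the system is linear in `E`, so `E` can be eliminated. Writing `s` for the
sonic speed, this gives `β₁ = -(u' / u + γ * u ^ γ * u' / s ^ (γ + 1))`, whence
`-2 β₁ - (2m - 1) α₁₁' = 2 u' / u + ((2m + 1) (γ + 1) - 2) * u ^ γ * u' / s ^ (γ + 1)`.
For `m ≥ 0` and `γ ≥ 1` the last term is nonnegative, so a positive lower bound for `2 u' / u` on a
compact set is a valid `λ_L`, and it does not depend on `m`. -/

/-- The normalized coefficient `α₁₁` of `∂₁₁` in the linearized operator
`L w = α₁₁ ∂₁₁w + ∂₂₂w + β₁ ∂₁w`, for an arbitrary velocity profile `u` and sonic speed `s`. -/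
noncomputable def principalCoeff (γ s : ℝ) (u : ℝ → ℝ) (x : ℝ) : ℝ :=
  1 - (u x / s) ^ (γ + 1)

/-- The normalized coefficient `β₁` of `∂₁` in the linearized operator
`L w = α₁₁ ∂₁₁w + ∂₂₂w + β₁ ∂₁w`. The derivative of `u` is taken within the domain `I` of the flow,
hence one-sided at endpoints. -/
noncomputable def driftCoeff (γ s : ℝ) (I : Set ℝ) (u E : ℝ → ℝ) (x : ℝ) : ℝ :=
  (E x - (γ + 1) * derivWithin u I x * u x) * u x ^ (γ - 1) / s ^ (γ + 1)

section

variable {γ s x : ℝ} {I : Set ℝ} {u E : ℝ → ℝ}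

theorem hasDerivWithinAt_principalCoeff {u' : ℝ} (hs : 0 < s) (hux : 0 < u x)
    (hu : HasDerivWithinAt u u' I x) :
    HasDerivWithinAt (principalCoeff γ s u) (-((γ + 1) * (u x ^ γ * u' / s ^ (γ + 1)))) I x := by
  have h := ((hu.div_const s).rpow_const (p := γ + 1) (.inl (div_pos hux hs).ne')).const_sub 1
  refine h.congr_deriv ?_
  rw [add_sub_cancel_right, Real.div_rpow hux.le hs.le, Real.rpow_add_one hs.ne']
  ring

theorem driftCoeff_eq (hs : 0 < s) (hux : 0 < u x)
    (hode : (u x ^ (γ + 1) - s ^ (γ + 1)) * derivWithin u I x = E x * u x ^ γ) :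
    driftCoeff γ s I u E x =
      -(derivWithin u I x / u x + γ * (u x ^ γ * derivWithin u I x / s ^ (γ + 1))) := by
  have hS : s ^ (γ + 1) ≠ 0 := (Real.rpow_pos_of_pos hs _).ne'
  rw [Real.rpow_add_one hux.ne'] at hode
  rw [driftCoeff, Real.rpow_sub_one hux.ne']
  field_simp
  linear_combination -hode

theorem neg_two_mul_driftCoeff_sub_eq (m : ℝ) (hs : 0 < s) (hux : 0 < u x)
    (hI : UniqueDiffWithinAt ℝ I x) (hu : DifferentiableWithinAt ℝ u I x)
    (hode : (u x ^ (γ + 1) - s ^ (γ + 1)) * derivWithin u I x = E x * u x ^ γ) :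
    -2 * driftCoeff γ s I u E x - (2 * m - 1) * derivWithin (principalCoeff γ s u) I x =
      2 * (derivWithin u I x / u x) +
        ((2 * m + 1) * (γ + 1) - 2) * (u x ^ γ * derivWithin u I x / s ^ (γ + 1)) := by
  rw [driftCoeff_eq hs hux hode,
    (hasDerivWithinAt_principalCoeff hs hux hu.hasDerivWithinAt).derivWithin hI]
  ring

theorem two_mul_derivWithin_div_le {m : ℝ} (hm : 2 ≤ (2 * m + 1) * (γ + 1)) (hs : 0 < s)
    (hux : 0 < u x) (hu' : 0 ≤ derivWithin u I x) (hI : UniqueDiffWithinAt ℝ I x)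
    (hu : DifferentiableWithinAt ℝ u I x)
    (hode : (u x ^ (γ + 1) - s ^ (γ + 1)) * derivWithin u I x = E x * u x ^ γ) :
    2 * (derivWithin u I x / u x) ≤
      -2 * driftCoeff γ s I u E x - (2 * m - 1) * derivWithin (principalCoeff γ s u) I x := by
  rw [neg_two_mul_driftCoeff_sub_eq m hs hux hI hu hode]
  exact le_add_of_nonneg_right (mul_nonneg (sub_nonneg.2 hm) (by positivity))

theorem exists_pos_forall_le_two_mul_derivWithin_div {K : Set ℝ} (hI : UniqueDiffOn ℝ I)
    (hK : IsCompact K) (hKI : K ⊆ I) (hu : ContDiffOn ℝ 1 u I) (hpos : ∀ x ∈ K, 0 < u x)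
    (hacc : ∀ x ∈ K, 0 < derivWithin u I x) :
    ∃ c : ℝ, 0 < c ∧ ∀ x ∈ K, c ≤ 2 * (derivWithin u I x / u x) := by
  have hcont : ContinuousOn (fun x ↦ 2 * (derivWithin u I x / u x)) K :=
    (((hu.continuousOn_derivWithin hI le_rfl).mono hKI).div (hu.continuousOn.mono hKI)
      fun x hx ↦ (hpos x hx).ne').const_mul 2
  exact hK.exists_forall_le' hcont fun x hx ↦ mul_pos two_pos (div_pos (hacc x hx) (hpos x hx))

theorem stmt11_general {K : Set ℝ} (hs : 0 < s) (hI : UniqueDiffOn ℝ I) (hK : IsCompact K)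
    (hKI : K ⊆ I) (hu : ContDiffOn ℝ 1 u I) (hpos : ∀ x ∈ K, 0 < u x)
    (hode : ∀ x ∈ K, (u x ^ (γ + 1) - s ^ (γ + 1)) * derivWithin u I x = E x * u x ^ γ)
    (hacc : ∀ x ∈ K, 0 < derivWithin u I x) :
    ∃ c : ℝ, 0 < c ∧ ∀ m : ℝ, 2 ≤ (2 * m + 1) * (γ + 1) → ∀ x ∈ K,
      c ≤ -2 * driftCoeff γ s I u E x - (2 * m - 1) * derivWithin (principalCoeff γ s u) I x := by
  obtain ⟨c, hc, hle⟩ := exists_pos_forall_le_two_mul_derivWithin_div hI hK hKI hu hpos hacc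
  refine ⟨c, hc, fun m hm x hx ↦ (hle x hx).trans ?_⟩
  exact two_mul_derivWithin_div_le hm hs (hpos x hx) (hacc x hx).le (hI x (hKI hx))
    (hu.differentiableOn one_ne_zero x (hKI hx)) (hode x hx)

end

/-- The key coefficient inequality `−2β₁ − (2m−1)∂₁α₁₁ ≥ λ_L > 0` on `[0, L]`, `L < l_max`,
for `m = 0,1,2,3`, along the accelerating smooth transonic solution. -/
theorem stmt11
    (γ ρin S₀ J u₀ E₀ lmax : ℝ)
    (hγ : 1 < γ) (hρin : 0 < ρin) (hS₀ : 0 < S₀) (hJ : 0 < J)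
    (hζ₀ : 1 < uIn ρin J / usonic γ S₀ J)
    (hinit : (u₀, E₀) ∈ critTrajAcc γ ρin S₀ J)
    (hu₀ : 0 < u₀) (hu₀s : u₀ < usonic γ S₀ J)
    (hlmax : 0 < lmax)
    (u E : ℝ → ℝ)
    (husm : ContDiffOn ℝ (⊤ : ℕ∞) u (Icc 0 lmax)) (hEsm : ContDiffOn ℝ (⊤ : ℕ∞) E (Icc 0 lmax))
    (hupos : ∀ x ∈ Icc (0:ℝ) lmax, 0 < u x)
    (hu0 : u 0 = u₀) (hE0 : E 0 = E₀)
    (hODE : ∀ x ∈ Icc (0:ℝ) lmax,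
      (u x ^ (γ + 1) - usonic γ S₀ J ^ (γ + 1)) * derivWithin u (Icc 0 lmax) x
        = E x * u x ^ γ ∧
      derivWithin E (Icc 0 lmax) x = J / u x - ρin)
    (hacc : ∀ x ∈ Ico (0:ℝ) lmax, 0 < derivWithin u (Icc 0 lmax) x)
    :
    ∀ L : ℝ, 0 < L → L < lmax →
      ∃ lamL : ℝ, 0 < lamL ∧
        ∀ m : ℕ, m ≤ 3 → ∀ x ∈ Icc (0:ℝ) L,
          lamL ≤
            -2 * ((E x - (γ + 1) * derivWithin u (Icc 0 lmax) x * u x) * u x ^ (γ - 1)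
                    / usonic γ S₀ J ^ (γ + 1))
              - (2 * (m : ℝ) - 1)
                * derivWithin (fun y => 1 - (u y / usonic γ S₀ J) ^ (γ + 1))
                    (Icc 0 lmax) x := by
  intro L _ hL
  have hKI : Icc 0 L ⊆ Icc 0 lmax := Icc_subset_Icc_right hL.le
  obtain ⟨c, hc, hle⟩ := stmt11_general (hu₀.trans hu₀s) (uniqueDiffOn_Icc hlmax) isCompact_Icc
    hKI (husm.of_le (by norm_cast)) (fun x hx ↦ hupos x (hKI hx))
    (fun x hx ↦ (hODE x (hKI hx)).1) fun x hx ↦ hacc x ⟨hx.1, hx.2.trans_lt hL⟩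
  exact ⟨c, hc, fun m _ ↦ hle m (by nlinarith [m.cast_nonneg (α := ℝ)])⟩
end
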